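/- Let α > 1, r = (1/2)(1 - 1/α), s ≥ 2, and n'_* = ⌊-log_r(s-1)⌋ + 1. If the even integer k satisfies k ≥ max{ ⌈2(1-r+r^{n'_*})^{s-2}[(1-r+r^{n'_*}) + (s-1)] / ((1-r)^{s-2}[(1-r)+(s-1)(1-r^{n'_*})]) + 2⌉·((1-r)/r)^{s-1}, 2((1-r)/r)^s, 2(1/(1-r))^{s-1} + 2 }, then for every choice of positive integers a, b with a + b = s, [0, k/2] = { ∑_{i=1}^{k/2} x_{2i-1}^a x_{2i}^b : x_j ∈ C_α }. -/

import Mathlib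

/-- The `n`-th stage of the Cantor construction with ratio `r`:
`C_0 = [0,1]`, `C_{n+1} = f₀(C_n) ∪ f₁(C_n)` with `f₀ x = r x`, `f₁ x = r x + (1-r)`. -/
def preCantorR (r : ℝ) : ℕ → Set ℝ
  | 0 => Set.Icc 0 1
  | n + 1 =>
      (fun x => r * x) '' preCantorR r n ∪ (fun x => r * x + (1 - r)) '' preCantorR r n

/-- The generalized Cantor set with contraction ratio `r`. -/
def cantorSetR (r : ℝ) : Set ℝ := ⋂ n, preCantorR r n

/-- The classical Cantor ternary set. -/
def cantorTernary : Set ℝ := cantorSetR (1/3)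

/-- `pairSum a b m x = ∑_{i=1}^{m} x_{2i-1}^a x_{2i}^b` (0-indexed), i.e. the
non-diagonal form `f_{k,a,b}` with `k = 2m`. -/
def pairSum (a b m : ℕ) (x : ℕ → ℝ) : ℝ :=
  ∑ i ∈ Finset.range m, x (2 * i) ^ a * x (2 * i + 1) ^ b

/-- The image `f_{k,a,b}(S^k)` with `k = 2m`. -/
def imageOn (a b m : ℕ) (S : Set ℝ) : Set ℝ :=
  {y | ∃ x : ℕ → ℝ, (∀ i, x i ∈ S) ∧ y = pairSum a b m x}

/-- `n'_* = ⌊-log_r (s-1)⌋ + 1`. -/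
noncomputable def nstar' (r : ℝ) (s : ℕ) : ℤ := ⌊-Real.logb r ((s : ℝ) - 1)⌋ + 1

/-- Left endpoints of the intervals of length `r ^ n` that make up `preCantorR r n`. -/
def leftEndpointsR (r : ℝ) : ℕ → Set ℝ
  | 0 => {0}
  | n + 1 =>
      (fun x => r * x) '' leftEndpointsR r n ∪ (fun x => r * x + (1 - r)) '' leftEndpointsR r n

theorem leftEndpointsR_children {r : ℝ} (n : ℕ) {c : ℝ} (hc : c ∈ leftEndpointsR r n) :
    c ∈ leftEndpointsR r (n + 1) ∧ c + (1 - r) * r ^ n ∈ leftEndpointsR r (n + 1) := by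
  induction n generalizing c with
  | zero =>
    obtain rfl : c = 0 := hc
    exact ⟨Or.inl ⟨0, rfl, by simp⟩, Or.inr ⟨0, rfl, by simp⟩⟩
  | succ n ih =>
    rcases hc with ⟨e, he, rfl⟩ | ⟨e, he, rfl⟩
    · exact ⟨Or.inl ⟨e, (ih he).1, rfl⟩, Or.inl ⟨_, (ih he).2, by ring⟩⟩
    · exact ⟨Or.inr ⟨e, (ih he).1, rfl⟩, Or.inr ⟨_, (ih he).2, by ring⟩⟩

theorem Icc_subset_preCantorR {r : ℝ} (hr : 0 < r) (n : ℕ) {c : ℝ}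
    (hc : c ∈ leftEndpointsR r n) : Set.Icc c (c + r ^ n) ⊆ preCantorR r n := by
  induction n generalizing c with
  | zero =>
    obtain rfl : c = 0 := hc
    simp [preCantorR]
  | succ n ih =>
    intro x hx
    rcases hc with ⟨e, he, rfl⟩ | ⟨e, he, rfl⟩
    · have hx' : r * e ≤ x ∧ x ≤ r * e + r ^ (n + 1) := hx
      refine Or.inl ⟨x / r, ih he ⟨?_, ?_⟩, mul_div_cancel₀ x hr.ne'⟩
      · rw [le_div_iff₀ hr]; linarith
      · rw [div_le_iff₀ hr]; linear_combination hx'.2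
    · have hx' : r * e + (1 - r) ≤ x ∧ x ≤ r * e + (1 - r) + r ^ (n + 1) := hx
      refine Or.inr ⟨(x - (1 - r)) / r, ih he ⟨?_, ?_⟩, ?_⟩
      · rw [le_div_iff₀ hr]; linarith
      · rw [div_le_iff₀ hr]; linear_combination hx'.2
      · simp only
        rw [mul_div_cancel₀ _ hr.ne']; ring

theorem leftEndpointsR_bounds {r : ℝ} (hr : 0 < r) (hr1 : r ≤ 1) (n : ℕ) {c : ℝ}
    (hc : c ∈ leftEndpointsR r n) : 0 ≤ c ∧ c + r ^ n ≤ 1 := by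
  induction n generalizing c with
  | zero =>
    obtain rfl : c = 0 := hc
    simp
  | succ n ih =>
    rcases hc with ⟨e, he, rfl⟩ | ⟨e, he, rfl⟩ <;> obtain ⟨h0, h1⟩ := ih he <;>
      have h2 := mul_le_mul_of_nonneg_left h1 hr.le <;>
      have h3 := mul_nonneg hr.le h0 <;> rw [pow_succ] <;>
      constructor <;> simp only <;> nlinarith

theorem isCompact_preCantorR (r : ℝ) (n : ℕ) : IsCompact (preCantorR r n) := by
  induction n with
  | zero => exact isCompact_Icc
  | succ n ih => exact (ih.image (by fun_prop)).union (ih.image (by fun_prop))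

theorem preCantorR_subset_Icc {r : ℝ} (hr : 0 < r) (hr1 : r ≤ 1) (n : ℕ) :
    preCantorR r n ⊆ Set.Icc 0 1 := by
  induction n with
  | zero => exact subset_rfl
  | succ n ih =>
    rintro _ (⟨x, hx, rfl⟩ | ⟨x, hx, rfl⟩) <;> obtain ⟨h0, h1⟩ := ih hx <;>
      constructor <;> simp only <;> nlinarith

theorem preCantorR_succ_subset {r : ℝ} (hr : 0 < r) (hr1 : r ≤ 1) (n : ℕ) :
    preCantorR r (n + 1) ⊆ preCantorR r n := by
  induction n with
  | zero => exact preCantorR_subset_Icc hr hr1 1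
  | succ n ih =>
    rintro _ (⟨x, hx, rfl⟩ | ⟨x, hx, rfl⟩)
    · exact Or.inl ⟨x, ih hx, rfl⟩
    · exact Or.inr ⟨x, ih hx, rfl⟩

theorem cantorSetR_subset_Icc {r : ℝ} : cantorSetR r ⊆ Set.Icc 0 1 :=
  Set.iInter_subset (preCantorR r) 0

theorem zero_mem_cantorSetR {r : ℝ} : (0 : ℝ) ∈ cantorSetR r := by
  refine Set.mem_iInter.2 fun n => ?_
  induction n with
  | zero => simp [preCantorR]
  | succ n ih => exact Or.inl ⟨0, ih, mul_zero r⟩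

theorem one_mem_cantorSetR {r : ℝ} : (1 : ℝ) ∈ cantorSetR r := by
  refine Set.mem_iInter.2 fun n => ?_
  induction n with
  | zero => simp [preCantorR]
  | succ n ih => exact Or.inr ⟨1, ih, by simp⟩

theorem mul_mem_cantorSetR {r x : ℝ} (hr : 0 < r) (hr1 : r ≤ 1) (hx : x ∈ cantorSetR r) :
    r * x ∈ cantorSetR r :=
  Set.mem_iInter.2 fun n =>
    preCantorR_succ_subset hr hr1 n (Or.inl ⟨x, Set.mem_iInter.1 hx n, rfl⟩)

theorem mul_add_mem_cantorSetR {r x : ℝ} (hr : 0 < r) (hr1 : r ≤ 1) (hx : x ∈ cantorSetR r) :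
    r * x + (1 - r) ∈ cantorSetR r :=
  Set.mem_iInter.2 fun n =>
    preCantorR_succ_subset hr hr1 n (Or.inr ⟨x, Set.mem_iInter.1 hx n, rfl⟩)

theorem pow_mul_mem_cantorSetR {r x : ℝ} (hr : 0 < r) (hr1 : r ≤ 1) (hx : x ∈ cantorSetR r)
    (n : ℕ) : r ^ n * x ∈ cantorSetR r := by
  induction n with
  | zero => simpa using hx
  | succ n ih =>
    rw [pow_succ', mul_assoc]
    exact mul_mem_cantorSetR hr hr1 ih

/-- Replace intervals `[A i, D i]` by one of their children `[A i, B i]`, `[B' i, D i]`, keeping a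
given point in the sum of the intervals, provided no gap exceeds the combined length of
the other intervals. -/
theorem exists_children_sum {ι : Type*} [Fintype ι] [DecidableEq ι] (A B B' D : ι → ℝ) (δ T : ℝ)
    (hAB : ∀ i, A i + δ ≤ B i) (hBD : ∀ i, B' i + δ ≤ D i) (hAD : ∀ i, A i + δ ≤ D i)
    (hgap : ∀ i, B' i - B i ≤ ((Fintype.card ι : ℝ) - 1) * δ)
    (hA : ∑ i, A i ≤ T) (hD : T ≤ ∑ i, D i) :
    ∃ lo hi : ι → ℝ, (∀ i, (lo i = A i ∧ hi i = B i) ∨ (lo i = B' i ∧ hi i = D i)) ∧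
      ∑ i, lo i ≤ T ∧ T ≤ ∑ i, hi i := by
  suffices h : ∀ s : Finset ι, ∃ lo hi : ι → ℝ,
      (∀ i ∈ s, (lo i = A i ∧ hi i = B i) ∨ (lo i = B' i ∧ hi i = D i)) ∧
      (∀ i ∉ s, lo i = A i ∧ hi i = D i) ∧ ∑ i, lo i ≤ T ∧ T ≤ ∑ i, hi i by
    obtain ⟨lo, hi, h1, -, h2⟩ := h Finset.univ
    exact ⟨lo, hi, fun i => h1 i (Finset.mem_univ i), h2⟩
  intro s
  induction s using Finset.induction_on with
  | empty => exact ⟨A, D, by simp, by simp, hA, hD⟩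
  | insert j s hj ih =>
    obtain ⟨lo, hi, h1, h2, hlo, hhi⟩ := ih
    obtain ⟨hjl, hjh⟩ := h2 j hj
    have hw : ∀ i, lo i + δ ≤ hi i := by
      intro i
      by_cases his : i ∈ s
      · rcases h1 i his with ⟨e1, e2⟩ | ⟨e1, e2⟩
        · rw [e1, e2]; exact hAB i
        · rw [e1, e2]; exact hBD i
      · rw [(h2 i his).1, (h2 i his).2]; exact hAD i
    have hjm := Finset.mem_univ j
    have hwidth : ∑ i ∈ Finset.univ \ {j}, lo i + ((Fintype.card ι : ℝ) - 1) * δ ≤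
        ∑ i ∈ Finset.univ \ {j}, hi i := by
      have hcard : ((Finset.univ \ {j}).card : ℝ) = (Fintype.card ι : ℝ) - 1 := by
        rw [Finset.cast_card_sdiff (by simp)]
        simp
      calc _ = ∑ i ∈ Finset.univ \ {j}, (lo i + δ) := by
            rw [Finset.sum_add_distrib, Finset.sum_const, nsmul_eq_mul, hcard]
        _ ≤ _ := Finset.sum_le_sum fun i _ => hw i
    have hlo' := Finset.sum_update_of_mem hjm lo
    have hhi' := Finset.sum_update_of_mem hjm hi
    have slo : ∑ i, lo i = A j + ∑ i ∈ Finset.univ \ {j}, lo i := by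
      rw [← hlo', ← hjl, Function.update_eq_self]
    have shi : ∑ i, hi i = D j + ∑ i ∈ Finset.univ \ {j}, hi i := by
      rw [← hhi', ← hjh, Function.update_eq_self]
    have key : ∀ p q : ℝ, ((p = A j ∧ q = B j) ∨ (p = B' j ∧ q = D j)) →
        p + ∑ i ∈ Finset.univ \ {j}, lo i ≤ T → T ≤ q + ∑ i ∈ Finset.univ \ {j}, hi i →
        ∃ lo hi : ι → ℝ,
          (∀ i ∈ insert j s, (lo i = A i ∧ hi i = B i) ∨ (lo i = B' i ∧ hi i = D i)) ∧
          (∀ i ∉ insert j s, lo i = A i ∧ hi i = D i) ∧ ∑ i, lo i ≤ T ∧ T ≤ ∑ i, hi i := by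
      intro p q hpq hp hq
      refine ⟨Function.update lo j p, Function.update hi j q, fun i hi' => ?_, fun i hi' => ?_,
        (hlo' p).trans_le hp, hq.trans_eq (hhi' q).symm⟩
      · by_cases hij : i = j
        · subst hij; simpa using hpq
        · simpa [hij] using h1 i (Finset.mem_of_mem_insert_of_ne hi' hij)
      · rw [Finset.mem_insert, not_or] at hi'
        simpa [hi'.1] using h2 i hi'.2
    by_cases hT : T ≤ B j + ∑ i ∈ Finset.univ \ {j}, hi i
    · exact key _ _ (Or.inl ⟨rfl, rfl⟩) (by linarith) hT
    · have := hgap j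
      exact key _ _ (Or.inr ⟨rfl, rfl⟩) (by linarith) (by linarith)

/-- Sums of `q` values on the Cantor set of a function of small distortion fill an interval. -/
theorem exists_sum_cantorSetR_eq {r : ℝ} (hr : 0 < r) (hr2 : r < 1 / 2) {g : ℝ → ℝ}
    (hg : Continuous g) {d D : ℝ} (hd : 0 ≤ d)
    (hlow : ∀ u v, 0 ≤ u → u ≤ v → v ≤ 1 → d * (v - u) ≤ g v - g u)
    (hup : ∀ u v, 0 ≤ u → u ≤ v → v ≤ 1 → g v - g u ≤ D * (v - u))
    {q : ℕ} (hq : D * (1 - 2 * r) ≤ ((q : ℝ) - 1) * (d * r)) {T : ℝ}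
    (hT0 : q * g 0 ≤ T) (hT1 : T ≤ q * g 1) :
    ∃ u : Fin q → ℝ, (∀ i, u i ∈ cantorSetR r) ∧ ∑ i, g (u i) = T := by
  have hr1 : r ≤ 1 := by linarith
  have stage : ∀ n, ∃ c : Fin q → ℝ, (∀ i, c i ∈ leftEndpointsR r n) ∧
      ∑ i, g (c i) ≤ T ∧ T ≤ ∑ i, g (c i + r ^ n) := by
    intro n
    induction n with
    | zero => exact ⟨fun _ => 0, fun _ => rfl, by simpa using hT0, by simpa using hT1⟩
    | succ n ih =>
      obtain ⟨c, hc, hlo, hhi⟩ := ih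
      have hb := fun i => leftEndpointsR_bounds hr hr1 n (hc i)
      have hh : 0 < r ^ n := pow_pos hr n
      set h := r ^ n with hdef
      have hrh : 0 < r * h := mul_pos hr hh
      have hrh2 : r * h < h / 2 := by nlinarith
      obtain ⟨lo, hi, h1, h2, h3⟩ := exists_children_sum (fun i => g (c i))
        (fun i => g (c i + r * h)) (fun i => g (c i + (1 - r) * h)) (fun i => g (c i + h))
        (d * (r * h)) T
        (fun i => by have := hlow (c i) (c i + r * h) (hb i).1 (by linarith)
                        (by linarith [(hb i).2]); linarith)
        (fun i => by have := hlow (c i + (1 - r) * h) (c i + h) (by linarith [(hb i).1])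
                        (by linarith) (hb i).2; linarith)
        (fun i => by have := hlow (c i) (c i + h) (hb i).1 (by linarith) (hb i).2
                     nlinarith)
        (fun i => by have := hup (c i + r * h) (c i + (1 - r) * h) (by linarith [(hb i).1])
                        (by linarith) (by linarith [(hb i).2])
                     simp only [Fintype.card_fin] at *; nlinarith)
        hlo hhi
      have h4 : ∀ i, ∃ c' ∈ leftEndpointsR r (n + 1), lo i = g c' ∧ hi i = g (c' + r ^ (n + 1)) := by
        intro i
        have hch := leftEndpointsR_children n (hc i)
        rcases h1 i with ⟨e1, e2⟩ | ⟨e1, e2⟩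
        · exact ⟨_, hch.1, e1, by rw [e2, pow_succ']⟩
        · refine ⟨_, hch.2, e1, ?_⟩
          rw [e2, pow_succ', ← hdef]
          congr 1
          ring
      choose c' hc' hlo' hhi' using h4
      refine ⟨c', hc', ?_, ?_⟩
      · simpa only [hlo'] using h2
      · simpa only [hhi'] using h3
  let X : ℕ → Set (Fin q → ℝ) := fun n =>
    Set.univ.pi (fun _ => preCantorR r n) ∩ {u | ∑ i, g (u i) = T}
  have hcl : IsClosed {u : Fin q → ℝ | ∑ i, g (u i) = T} :=
    isClosed_eq (by fun_prop) continuous_const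
  have hcomp : ∀ n, IsCompact (X n) := fun n =>
    (isCompact_univ_pi fun _ => isCompact_preCantorR r n).inter_right hcl
  have hne : (⋂ n, X n).Nonempty := by
    refine IsCompact.nonempty_iInter_of_sequence_nonempty_isCompact_isClosed X ?_ ?_ (hcomp 0)
      fun n => (hcomp n).isClosed
    · exact fun n => Set.inter_subset_inter_left _
        (Set.pi_mono fun i _ => preCantorR_succ_subset hr hr1 n)
    · intro n
      obtain ⟨c, hc, hlo, hhi⟩ := stage n
      have hcont : Continuous fun t : ℝ => ∑ i, g (c i + t) := by fun_prop
      obtain ⟨t, ⟨ht0, ht1⟩, ht⟩ := intermediate_value_Icc (pow_nonneg hr.le n)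
        hcont.continuousOn (a := 0) (b := r ^ n) ⟨by simpa using hlo, hhi⟩
      exact ⟨fun i => c i + t, fun i _ => Icc_subset_preCantorR hr n (hc i)
        ⟨by linarith, by linarith⟩, ht⟩
  obtain ⟨u, hu⟩ := hne
  rw [Set.mem_iInter] at hu
  exact ⟨u, fun i => Set.mem_iInter.2 fun n => (hu n).1 i trivial, (hu 0).2⟩

theorem pow_sub_pow_bounds {l x y : ℝ} (hl : 0 ≤ l) (hlx : l ≤ x) (hxy : x ≤ y) (hy : y ≤ 1)
    (n : ℕ) : (n + 1) * l ^ n * (y - x) ≤ y ^ (n + 1) - x ^ (n + 1) ∧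
      y ^ (n + 1) - x ^ (n + 1) ≤ (n + 1) * (y - x) := by
  induction n with
  | zero => simp
  | succ n ih =>
    obtain ⟨h1, h2⟩ := ih
    have hx0 : 0 ≤ x := hl.trans hlx
    have hy0 : 0 ≤ y := hx0.trans hxy
    have e : y ^ (n + 1 + 1) - x ^ (n + 1 + 1) =
        y ^ (n + 1) * (y - x) + x * (y ^ (n + 1) - x ^ (n + 1)) := by ring
    have hpos : 0 ≤ y ^ (n + 1) - x ^ (n + 1) := sub_nonneg.2 (by gcongr)
    have hd : 0 ≤ y - x := sub_nonneg.2 hxy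
    rw [e]
    push_cast
    constructor
    · have h3 : l ^ (n + 1) * (y - x) ≤ y ^ (n + 1) * (y - x) := by
        gcongr
        exact hlx.trans hxy
      have h4 : l * ((n + 1) * l ^ n * (y - x)) ≤ x * (y ^ (n + 1) - x ^ (n + 1)) :=
        (mul_le_mul_of_nonneg_left h1 hl).trans (mul_le_mul_of_nonneg_right hlx hpos)
      linear_combination h3 + h4
    · have h3 : y ^ (n + 1) * (y - x) ≤ y - x :=
        mul_le_of_le_one_left hd (pow_le_one₀ hy0 hy)
      have h4 : x * (y ^ (n + 1) - x ^ (n + 1)) ≤ y ^ (n + 1) - x ^ (n + 1) :=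
        mul_le_of_le_one_left hpos (hxy.trans hy)
      linarith

/-- Extend a finite family in the Cantor set by zeros. -/
theorem exists_sum_range_of_fin {r : ℝ} {q m e : ℕ} (hqm : q ≤ m) {T : ℝ} {v : Fin q → ℝ}
    (hv : ∀ i, v i ∈ cantorSetR r) (hsum : ∑ i, v i ^ (e + 1) = T) :
    ∃ x : ℕ → ℝ, (∀ i, x i ∈ cantorSetR r) ∧ ∑ i ∈ Finset.range m, x i ^ (e + 1) = T := by
  refine ⟨fun i => if h : i < q then v ⟨i, h⟩ else 0, fun i => ?_, ?_⟩
  · dsimp only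
    split_ifs with h
    · exact hv _
    · exact zero_mem_cantorSetR
  · rw [← hsum, ← Finset.sum_subset (Finset.range_subset_range.2 hqm), Finset.sum_range]
    · simp
    · intro i _ hi
      have : ¬ i < q := by simpa using hi
      simp [this]

/-- The number of summands required for exponent `n + 2`, with `t = (1 - r) / r`. -/
theorem summand_bound {t M : ℝ} (ht : 1 < t) (n : ℕ) (h1 : 2 * t ^ (2 * n + 3) ≤ M)
    (h2 : ((1 + t) / t) ^ (2 * n + 3) ≤ M) :
    2 * t ^ (n + 2) + (t - 1) * t * (1 + t) ^ (n + 1) ≤ M := by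
  have ht0 : 0 < t := by linarith
  rcases le_total (1 + t) (t ^ 2) with h | h
  · refine le_trans ?_ h1
    clear h1 h2
    induction n with
    | zero => linear_combination mul_nonneg ht0.le (sq_nonneg (t - 1))
    | succ n ih =>
      have h3 : t ^ 2 * (2 * t ^ (n + 2)) ≥ t * (2 * t ^ (n + 2)) := by
        gcongr
        nlinarith
      have h4 : t ^ 2 * ((t - 1) * t * (1 + t) ^ (n + 1)) ≥
          (1 + t) * ((t - 1) * t * (1 + t) ^ (n + 1)) := by
        have : 0 ≤ t - 1 := by linarith
        gcongr
      have h5 := mul_le_mul_of_nonneg_left ih (sq_nonneg t)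
      linear_combination h5 + h3 + h4
  · cases n with
    | zero => linear_combination h1 + mul_nonneg ht0.le (sq_nonneg (t - 1))
    | succ n =>
      have hM : 0 ≤ M := le_trans (by positivity) h1
      have ha : 2 * t ^ (n + 1 + 2) ≤ M / t ^ 2 := by
        rw [le_div_iff₀ (by positivity)]
        refine le_trans ?_ h1
        rw [mul_assoc, ← pow_add]
        have : t ^ (n + 1 + 2 + 2) ≤ t ^ (2 * (n + 1) + 3) :=
          pow_le_pow_right₀ ht.le (by omega)
        linarith
      have hb : (t - 1) * t * (1 + t) ^ (n + 1 + 1) ≤ (t - 1) * M := by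
        have hu : 1 + t ≤ ((1 + t) / t) ^ 2 := by
          rw [div_pow, le_div_iff₀ (by positivity)]
          nlinarith
        have hu2 : t ≤ (1 + t) / t := by
          rw [le_div_iff₀ ht0]; nlinarith
        have h3 : (1 + t) ^ (n + 1 + 1) ≤ (((1 + t) / t) ^ 2) ^ (n + 1 + 1) := by gcongr
        have h4 : t * (1 + t) ^ (n + 1 + 1) ≤ M := by
          calc t * (1 + t) ^ (n + 1 + 1)
              ≤ ((1 + t) / t) * (((1 + t) / t) ^ 2) ^ (n + 1 + 1) := by gcongr
            _ = ((1 + t) / t) ^ (2 * (n + 1) + 3) := by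
              rw [← pow_mul, ← pow_succ']
              congr 1
            _ ≤ M := h2
        rw [mul_assoc]
        exact mul_le_mul_of_nonneg_left h4 (by linarith)
      have hc : 1 / t ^ 2 + (t - 1) ≤ 1 := by
        rw [div_add' _ _ _ (by positivity), div_le_one (by positivity)]
        nlinarith [mul_nonneg (sub_nonneg.2 ht.le) (sub_nonneg.2 h)]
      calc _ ≤ M / t ^ 2 + (t - 1) * M := add_le_add ha hb
        _ = (1 / t ^ 2 + (t - 1)) * M := by ring
        _ ≤ 1 * M := by gcongr
        _ = M := one_mul M

/-- Every point of `[0, m]` is a sum of `m` powers of elements of the Cantor set. -/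
theorem exists_sum_pow_cantorSetR {r : ℝ} (hr : 0 < r) (hr2 : r < 1 / 2) (n m : ℕ)
    (h1 : 2 * ((1 - r) / r) ^ (2 * n + 1) ≤ m) (h2 : (1 / (1 - r)) ^ (2 * n + 1) ≤ m)
    {T : ℝ} (hT0 : 0 ≤ T) (hTm : T ≤ m) :
    ∃ x : ℕ → ℝ, (∀ i, x i ∈ cantorSetR r) ∧ ∑ i ∈ Finset.range m, x i ^ (n + 1) = T := by
  have hr1 : r ≤ 1 := by linarith
  have h1r : 0 < 1 - r := by linarith
  have ht : 1 < (1 - r) / r := by rw [one_lt_div hr]; linarith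
  cases n with
  | zero =>
    have h3 : (1 - r) / r ≤ m := by
      have : 2 * ((1 - r) / r) ≤ m := by simpa using h1
      linarith
    rw [div_le_iff₀ hr] at h3
    obtain ⟨u, hu, hs⟩ := exists_sum_cantorSetR_eq hr hr2 (g := fun x => x) continuous_id
      (d := 1) (D := 1) zero_le_one (by intros; linarith) (by intros; linarith)
      (q := m) (T := T) (by linarith) (by simpa using hT0) (by simpa using hTm)
    exact exists_sum_range_of_fin le_rfl hu (by simpa using hs)
  | succ n =>
    set t := (1 - r) / r with htdef
    have ht0 : 0 < t := by linarith
    have htr : t * r = 1 - r := div_mul_cancel₀ _ hr.ne'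
    have hu : 1 / (1 - r) = (1 + t) / t := by
      rw [div_eq_div_iff h1r.ne' ht0.ne']; linear_combination htr
    have hM := summand_bound ht n (M := m) h1 (by rw [← hu]; exact h2)
    set q := ⌊(m : ℝ) / t ^ (n + 2)⌋₊ with hq
    have htp : 0 < t ^ (n + 2) := by positivity
    have hqle : q * t ^ (n + 2) ≤ m := by
      rw [← le_div_iff₀ htp]
      exact Nat.floor_le (by positivity)
    have hqgt : (m : ℝ) / t ^ (n + 2) - 1 < q := by
      have := Nat.lt_floor_add_one ((m : ℝ) / t ^ (n + 2))
      linarith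
    have hqbig : 1 - 2 * r ≤ ((q : ℝ) - 1) * (r * (1 - r) ^ (n + 1)) := by
      have h3 : 2 + (t - 1) * t * (1 + t) ^ (n + 1) / t ^ (n + 2) ≤ m / t ^ (n + 2) := by
        rw [← sub_nonneg]
        have : (m : ℝ) / t ^ (n + 2) - (2 + (t - 1) * t * (1 + t) ^ (n + 1) / t ^ (n + 2)) =
            (m - (2 * t ^ (n + 2) + (t - 1) * t * (1 + t) ^ (n + 1))) / t ^ (n + 2) := by
          field_simp
        rw [this]
        exact div_nonneg (by linarith) htp.le
      have h4 : (t - 1) * t * (1 + t) ^ (n + 1) / t ^ (n + 2) * (r * (1 - r) ^ (n + 1)) =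
          1 - 2 * r := by
        have h5 : (1 + t) * (1 - r) = t := by linear_combination (-1 : ℝ) * htr
        have h6 : (1 + t) ^ (n + 1) * (1 - r) ^ (n + 1) = t ^ (n + 1) := by
          rw [← mul_pow, h5]
        rw [div_mul_eq_mul_div, div_eq_iff htp.ne']
        linear_combination (t - 1) * t * r * h6 + t ^ (n + 2) * htr
      rw [← h4]
      gcongr
      linarith
    have hlpow : 0 < (1 - r) ^ (n + 1) := by positivity
    have hlpow1 : (1 - r) ^ (n + 1) ≤ 1 := pow_le_one₀ h1r.le (by linarith)
    have hqr : 1 - r ≤ q * r := by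
      have h3 : 0 < ((q : ℝ) - 1) := by
        by_contra hneg
        have := mul_nonpos_of_nonpos_of_nonneg (not_lt.1 hneg) (mul_pos hr hlpow).le
        linarith
      have h4 : ((q : ℝ) - 1) * (r * (1 - r) ^ (n + 1)) ≤ ((q : ℝ) - 1) * (r * 1) := by gcongr
      linarith
    -- a box of `p ≥ q` variables in `[1 - r, 1]`, the others being zero
    have box : ∀ p : ℕ, q ≤ p → p ≤ m → ∀ S : ℝ, p * (1 - r) ^ (n + 2) ≤ S → S ≤ p →
        ∃ x : ℕ → ℝ, (∀ i, x i ∈ cantorSetR r) ∧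
          ∑ i ∈ Finset.range m, x i ^ (n + 1 + 1) = S := by
      intro p hqp hpm S hS0 hS1
      have hb := fun u v (h0 : (0 : ℝ) ≤ u) (huv : u ≤ v) (hv : v ≤ 1) =>
        pow_sub_pow_bounds (l := 1 - r) (x := r * u + (1 - r)) (y := r * v + (1 - r)) h1r.le
          (by nlinarith) (by nlinarith) (by nlinarith) (n + 1)
      have hqp' : (q : ℝ) ≤ p := by exact_mod_cast hqp
      obtain ⟨u, hu, hs⟩ := exists_sum_cantorSetR_eq hr hr2
        (g := fun x => (r * x + (1 - r)) ^ (n + 1 + 1)) (by fun_prop)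
        (d := ((n + 1 : ℕ) + 1) * (1 - r) ^ (n + 1) * r) (D := ((n + 1 : ℕ) + 1) * r)
        (by positivity)
        (fun u v h0 huv hv => by have := (hb u v h0 huv hv).1; linear_combination this)
        (fun u v h0 huv hv => by have := (hb u v h0 huv hv).2; linear_combination this)
        (q := p) (T := S)
        (by
          have h3 : 1 - 2 * r ≤ ((p : ℝ) - 1) * (r * (1 - r) ^ (n + 1)) :=
            hqbig.trans (by gcongr)
          have h4 : (0 : ℝ) ≤ ((n + 1 : ℕ) + 1) * r := by positivity
          linear_combination mul_le_mul_of_nonneg_left h3 h4)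
        (by simpa using hS0) (by simpa using hS1)
      exact exists_sum_range_of_fin hpm (fun i => mul_add_mem_cantorSetR hr hr1 (hu i)) hs
    have hqm : q ≤ m := by
      have : (q : ℝ) ≤ m := le_trans (le_mul_of_one_le_right (by positivity)
        (one_le_pow₀ ht.le)) hqle
      exact_mod_cast this
    have top : ∀ S : ℝ, m * r ^ (n + 2) ≤ S → S ≤ m →
        ∃ x : ℕ → ℝ, (∀ i, x i ∈ cantorSetR r) ∧
          ∑ i ∈ Finset.range m, x i ^ (n + 1 + 1) = S := by
      intro S hS0 hS1
      by_cases hSq : S ≤ q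
      · refine box q le_rfl hqm S (le_trans ?_ hS0) hSq
        rw [← htr, mul_pow, ← mul_assoc]
        gcongr
      · rw [not_le] at hSq
        have hqS : q < ⌈S⌉₊ := Nat.lt_ceil.2 hSq
        refine box ⌈S⌉₊ hqS.le (Nat.ceil_le.2 hS1) S ?_ (Nat.le_ceil S)
        have hS : (⌈S⌉₊ : ℝ) < S + 1 := Nat.ceil_lt_add_one (le_trans (by positivity) hSq.le)
        have hqS' : (q : ℝ) + 1 ≤ ⌈S⌉₊ := by exact_mod_cast hqS
        have h3 : (1 - r) ^ (n + 2) ≤ 1 - r := by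
          rw [pow_succ]
          exact mul_le_of_le_one_left h1r.le hlpow1
        have h4 : (⌈S⌉₊ : ℝ) * (1 - r) ^ (n + 2) ≤ ⌈S⌉₊ * (1 - r) := by gcongr
        nlinarith
    rcases hT0.eq_or_lt with rfl | hTpos
    · exact ⟨fun _ => 0, fun _ => zero_mem_cantorSetR, by simp⟩
    · have hmpos : (0 : ℝ) < m := hTpos.trans_le hTm
      have hρ0 : 0 < r ^ (n + 2) := by positivity
      have hρ1 : r ^ (n + 2) < 1 := pow_lt_one₀ hr.le (by linarith) (by omega)
      obtain ⟨N, hN1, hN2⟩ := exists_nat_pow_near_of_lt_one (div_pos hTpos hmpos)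
        ((div_le_one hmpos).2 hTm) hρ0 hρ1
      have hNpos : 0 < (r ^ (n + 2)) ^ N := by positivity
      rw [lt_div_iff₀ hmpos] at hN1
      rw [div_le_iff₀ hmpos] at hN2
      obtain ⟨x, hx, hs⟩ := top (T / (r ^ (n + 2)) ^ N)
        (by rw [le_div_iff₀ hNpos]; linear_combination hN1.le)
        (by rw [div_le_iff₀ hNpos]; linear_combination hN2)
      refine ⟨fun i => r ^ N * x i, fun i => pow_mul_mem_cantorSetR hr hr1 (hx i) N, ?_⟩
      simp only [mul_pow]
      rw [← Finset.mul_sum, hs, ← pow_mul, ← pow_mul, mul_comm N]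
      exact mul_div_cancel₀ _ (by positivity)

theorem imageOn_subset_Icc (a b m : ℕ) (r : ℝ) :
    imageOn a b m (cantorSetR r) ⊆ Set.Icc (0 : ℝ) m := by
  rintro _ ⟨x, hx, rfl⟩
  have hx' := fun i => cantorSetR_subset_Icc (hx i)
  constructor
  · exact Finset.sum_nonneg fun i _ =>
      mul_nonneg (pow_nonneg (hx' _).1 _) (pow_nonneg (hx' _).1 _)
  · calc pairSum a b m x ≤ ∑ _i ∈ Finset.range m, (1 : ℝ) := Finset.sum_le_sum fun i _ =>
          mul_le_one₀ (pow_le_one₀ (hx' _).1 (hx' _).2) (pow_nonneg (hx' _).1 _)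
            (pow_le_one₀ (hx' _).1 (hx' _).2)
      _ = m := by simp

theorem nstar'_nonneg {r : ℝ} (hr : 0 < r) (hr1 : r < 1) {s : ℕ} (hs : 2 ≤ s) :
    0 ≤ nstar' r s := by
  have hs' : (2 : ℝ) ≤ s := by exact_mod_cast hs
  have h : Real.logb r ((s : ℝ) - 1) ≤ 0 :=
    (Real.logb_nonpos_iff_of_base_lt_one hr hr1 (by linarith)).2 (by linarith)
  have : 0 ≤ ⌊-Real.logb r ((s : ℝ) - 1)⌋ := Int.floor_nonneg.2 (by linarith)
  unfold nstar'
  omega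

/-- Uniform version: one `k` works simultaneously for all decompositions `s = a + b`. -/
theorem stmt_15 (α r : ℝ) (hα : 1 < α) (hr : r = (1 - 1/α) / 2)
    (s : ℕ) (hs : 2 ≤ s) (k : ℕ) (hk : Even k) (hkpos : 0 < k)
    (hkge : (k : ℝ) ≥
      max (max
        ((⌈2 * ((1 - r + r ^ nstar' r s) ^ (s - 2) *
              ((1 - r + r ^ nstar' r s) + ((s : ℝ) - 1))) /
            ((1 - r) ^ (s - 2) *
              ((1 - r) + ((s : ℝ) - 1) * (1 - r ^ nstar' r s))) + 2⌉ : ℤ) *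
          ((1 - r) / r) ^ (s - 1))
        (2 * ((1 - r) / r) ^ s))
        (2 * (1 / (1 - r)) ^ (s - 1) + 2)) :
    ∀ a b : ℕ, 0 < a → 0 < b → a + b = s →
      Set.Icc (0 : ℝ) ((k : ℝ) / 2) = imageOn a b (k / 2) (cantorSetR r) := by
  have hα' : 0 < 1 / α ∧ 1 / α < 1 := ⟨by positivity, by rw [div_lt_one (by linarith)]; exact hα⟩
  have hr0 : 0 < r := by linarith
  have hr2 : r < 1 / 2 := by linarith
  have h1r : 0 < 1 - r := by linarith
  have ht : 1 ≤ (1 - r) / r := by rw [one_le_div hr0]; linarith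
  have hu : 1 ≤ 1 / (1 - r) := by rw [one_le_div h1r]; linarith
  obtain ⟨m, rfl⟩ := hk.two_dvd
  have hs' : (2 : ℝ) ≤ s := by exact_mod_cast hs
  rw [ge_iff_le, max_le_iff, max_le_iff] at hkge
  obtain ⟨⟨hfirst, -⟩, hthird⟩ := hkge
  push_cast at hfirst hthird
  have hm2 : (1 / (1 - r)) ^ (s - 1) ≤ m := by linarith
  have hm1 : 2 * ((1 - r) / r) ^ (s - 1) ≤ m := by
    have hε0 : 0 < r ^ nstar' r s := zpow_pos hr0 _
    have hε1 : r ^ nstar' r s ≤ 1 :=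
      zpow_le_one₀ hr0 (by linarith) (nstar'_nonneg hr0 (by linarith) hs)
    set ε := r ^ nstar' r s
    have hden : 0 < (1 - r) ^ (s - 2) * ((1 - r) + ((s : ℝ) - 1) * (1 - ε)) := by
      have : 0 ≤ ((s : ℝ) - 1) * (1 - ε) := mul_nonneg (by linarith) (by linarith)
      positivity
    have hle : (1 - r) ^ (s - 2) * ((1 - r) + ((s : ℝ) - 1) * (1 - ε)) ≤
        (1 - r + ε) ^ (s - 2) * ((1 - r + ε) + ((s : ℝ) - 1)) := by
      have h3 : ((s : ℝ) - 1) * (1 - ε) ≤ (s : ℝ) - 1 :=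
        mul_le_of_le_one_right (by linarith) (by linarith)
      have h4 : (1 - r) ^ (s - 2) ≤ (1 - r + ε) ^ (s - 2) := by
        gcongr
        linarith
      refine mul_le_mul h4 (by linarith) ?_ (by positivity)
      have : 0 ≤ ((s : ℝ) - 1) * (1 - ε) := mul_nonneg (by linarith) (by linarith)
      linarith
    set Q := 2 * ((1 - r + ε) ^ (s - 2) * ((1 - r + ε) + ((s : ℝ) - 1))) /
      ((1 - r) ^ (s - 2) * ((1 - r) + ((s : ℝ) - 1) * (1 - ε)))
    have hQ : 2 ≤ Q := by
      rw [le_div_iff₀ hden]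
      linarith
    have hceil : (4 : ℝ) ≤ ⌈Q + 2⌉ := le_trans (by linarith) (Int.le_ceil _)
    have hp : 0 < ((1 - r) / r) ^ (s - 1) := by positivity
    have := mul_le_mul_of_nonneg_right hceil hp.le
    linarith
  intro a b ha hb hab
  have hhalf : ((2 * m : ℕ) : ℝ) / 2 = m := by push_cast; ring
  rw [hhalf, Nat.mul_div_cancel_left m two_pos]
  refine Set.Subset.antisymm ?_ (imageOn_subset_Icc a b m r)
  rintro T ⟨hT0, hTm⟩
  have core : ∀ n : ℕ, 2 * n + 1 ≤ s - 1 → ∃ x : ℕ → ℝ, (∀ i, x i ∈ cantorSetR r) ∧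
      ∑ i ∈ Finset.range m, x i ^ (n + 1) = T := fun n hn =>
    exists_sum_pow_cantorSetR hr0 hr2 n m
      (le_trans (by gcongr) hm1) (le_trans (by gcongr) hm2) hT0 hTm
  rcases le_total a b with h | h
  · obtain ⟨x, hx, hs⟩ := core (a - 1) (by omega)
    rw [Nat.sub_add_cancel ha] at hs
    refine ⟨fun i => if i % 2 = 0 then x (i / 2) else 1, fun i => ?_, ?_⟩
    · dsimp only
      split_ifs
      exacts [hx _, one_mem_cantorSetR]
    · rw [← hs]
      refine Finset.sum_congr rfl fun i _ => ?_
      simp [Nat.add_mod]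
  · obtain ⟨x, hx, hs⟩ := core (b - 1) (by omega)
    rw [Nat.sub_add_cancel hb] at hs
    refine ⟨fun i => if i % 2 = 0 then 1 else x (i / 2), fun i => ?_, ?_⟩
    · dsimp only
      split_ifs
      exacts [one_mem_cantorSetR, hx _]
    · rw [← hs]
      refine Finset.sum_congr rfl fun i _ => ?_
      simp [Nat.add_mod, Nat.mul_add_div]
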